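/- Let f : ℝ^n → ℝ be twice continuously differentiable, let J be a set of coordinates, and suppose there are constants 0 < m ≤ M such that m‖v‖₂² ≤ ⟨v, ∇²f(z) v⟩ ≤ M‖v‖₂² for all z ∈ ℝ^n and all v ∈ ℝ^n supported on J. Then for every η > 0 and all x, y ∈ ℝ^n with x − y supported on J, ‖(x − y) − η·((∇f(x) − ∇f(y)) restricted to J)‖₂ ≤ √(1 + η²M² − 2ηm) · ‖x − y‖₂. -/

import Mathlib

open scoped RealInnerProductSpace

/-- `(v)` restricted to `J`: the vector agreeing with `v` on `J` and zero elsewhere. -/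
noncomputable def restrictTo {n : ℕ} (J : Finset (Fin n)) (v : EuclideanSpace ℝ (Fin n)) :
    EuclideanSpace ℝ (Fin n) :=
  (WithLp.equiv 2 _).symm (fun i => if i ∈ J then v i else 0)

theorem rgs_diff {n : ℕ} {f : EuclideanSpace ℝ (Fin n) → ℝ} (hf : ContDiff ℝ 2 f) :
    Differentiable ℝ (gradient f) := by
  have h1 : ContDiff ℝ 1 (fderiv ℝ f) := hf.fderiv_right (by norm_num)
  have h2 : Differentiable ℝ (fderiv ℝ f) := h1.differentiable (by norm_num)
  exact (InnerProductSpace.toDual ℝ (EuclideanSpace ℝ (Fin n))).symm.toContinuousLinearEquiv.differentiable.comp h2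

theorem rgs_hess {n : ℕ} {f : EuclideanSpace ℝ (Fin n) → ℝ} (hf : ContDiff ℝ 2 f)
    (z v w : EuclideanSpace ℝ (Fin n)) :
    ⟪w, fderiv ℝ (gradient f) z v⟫ = fderiv ℝ (fderiv ℝ f) z v w := by
  have h1 : ContDiff ℝ 1 (fderiv ℝ f) := hf.fderiv_right (by norm_num)
  have h2 : Differentiable ℝ (fderiv ℝ f) := h1.differentiable (by norm_num)
  have a : HasFDerivAt (fun z => ⟪w, gradient f z⟫)
      ((innerSL ℝ w).comp (fderiv ℝ (gradient f) z)) z :=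
    (innerSL ℝ w).hasFDerivAt.comp z (rgs_diff hf z).hasFDerivAt
  have b : HasFDerivAt (fun z => fderiv ℝ f z w)
      ((ContinuousLinearMap.apply ℝ ℝ w).comp (fderiv ℝ (fderiv ℝ f) z)) z :=
    (ContinuousLinearMap.apply ℝ ℝ w).hasFDerivAt.comp z (h2 z).hasFDerivAt
  have e : (fun z => ⟪w, gradient f z⟫) = (fun z => fderiv ℝ f z w) := by
    funext z
    rw [real_inner_comm, gradient, InnerProductSpace.toDual_symm_apply]
  rw [e] at a
  have := congrArg (fun L => L v) (a.unique b)
  simpa using this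

theorem rgs_symm {n : ℕ} {f : EuclideanSpace ℝ (Fin n) → ℝ} (hf : ContDiff ℝ 2 f)
    (z v w : EuclideanSpace ℝ (Fin n)) :
    ⟪w, fderiv ℝ (gradient f) z v⟫ = ⟪v, fderiv ℝ (gradient f) z w⟫ := by
  rw [rgs_hess hf, rgs_hess hf]
  exact (hf.contDiffAt.isSymmSndFDerivAt (by simp)) v w

theorem rgs_mvt {n : ℕ} {f : EuclideanSpace ℝ (Fin n) → ℝ} (hf : ContDiff ℝ 2 f)
    (x y w : EuclideanSpace ℝ (Fin n)) :
    ∃ z, ⟪w, gradient f x - gradient f y⟫ = ⟪w, fderiv ℝ (gradient f) z (x - y)⟫ := by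
  have hd : ∀ t : ℝ, HasDerivAt (fun t : ℝ => ⟪w, gradient f (y + t • (x - y))⟫)
      ⟪w, fderiv ℝ (gradient f) (y + t • (x - y)) (x - y)⟫ t := by
    intro t
    have h1 : HasDerivAt (fun t : ℝ => y + t • (x - y)) (x - y) t := by
      simpa using ((hasDerivAt_id t).smul_const (x - y)).const_add y
    have h2 := (rgs_diff hf (y + t • (x - y))).hasFDerivAt.comp_hasDerivAt t h1
    exact (innerSL ℝ w).hasFDerivAt.comp_hasDerivAt t h2
  obtain ⟨c, -, hc⟩ := exists_hasDerivAt_eq_slope _ _ (zero_lt_one (α := ℝ))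
    (fun t _ => (hd t).continuousAt.continuousWithinAt) (fun t _ => hd t)
  refine ⟨y + c • (x - y), ?_⟩
  rw [hc, inner_sub_right]
  simp

theorem restricted_gradient_step_contraction
    (n : ℕ) (f : EuclideanSpace ℝ (Fin n) → ℝ) (hf : ContDiff ℝ 2 f)
    (J : Finset (Fin n))
    (m M : ℝ) (hm : 0 < m) (hmM : m ≤ M)
    (hHess : ∀ (z v : EuclideanSpace ℝ (Fin n)), (∀ i ∉ J, v i = 0) →
      m * ‖v‖ ^ 2 ≤ ⟪v, fderiv ℝ (gradient f) z v⟫ ∧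
        ⟪v, fderiv ℝ (gradient f) z v⟫ ≤ M * ‖v‖ ^ 2) :
    ∀ (η : ℝ), 0 < η → ∀ (x y : EuclideanSpace ℝ (Fin n)), (∀ i ∉ J, (x - y) i = 0) →
      ‖(x - y) - η • restrictTo J (gradient f x - gradient f y)‖ ≤
        Real.sqrt (1 + η ^ 2 * M ^ 2 - 2 * η * m) * ‖x - y‖ := by
  intro η hη x y hxy
  have hP : ∀ u g : EuclideanSpace ℝ (Fin n), (∀ i ∉ J, u i = 0) →
      ⟪u, restrictTo J g⟫ = ⟪u, g⟫ := by
    intro u g hu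
    simp only [PiLp.inner_apply]
    refine Finset.sum_congr rfl fun i _ => ?_
    by_cases hi : i ∈ J
    · simp [restrictTo, hi]
    · simp [restrictTo, hi, hu i hi]
  set g := gradient f x - gradient f y with hg
  have hw : ∀ i ∉ J, (restrictTo J g) i = 0 := by
    intro i hi
    simp [restrictTo, hi]
  have hww := hP _ g hw
  have hdw := hP _ g hxy
  obtain ⟨z₁, hz₁⟩ := rgs_mvt hf x y (x - y)
  obtain ⟨z, hz⟩ := rgs_mvt hf x y (restrictTo J g)
  rw [← hg] at hz₁ hz
  have hlow := (hHess z₁ _ hxy).1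
  rw [← hz₁, ← hdw] at hlow
  rw [← hww, real_inner_self_eq_norm_sq] at hz
  generalize restrictTo J g = w at *
  generalize x - y = d at *
  have hM : 0 < M := hm.trans_le hmM
  have hup : ‖w‖ ≤ M * ‖d‖ := by
    rcases (norm_nonneg w).eq_or_lt with h0 | hwp
    · rw [← h0]; positivity
    rcases (norm_nonneg d).eq_or_lt with h0 | hdp
    · have : d = 0 := norm_eq_zero.mp h0.symm
      rw [this] at hz
      simp at hz
      rw [hz, norm_zero]; positivity
    have h1 := (hHess z (‖d‖ • w + ‖w‖ • d) (by
      intro i hi; simp [hw i hi, hxy i hi])).2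
    have h2 := (hHess z (‖d‖ • w - ‖w‖ • d) (by
      intro i hi; simp [hw i hi, hxy i hi])).1
    have h3 : 0 ≤ m * ‖‖d‖ • w - ‖w‖ • d‖ ^ 2 := by positivity
    have h4 : ‖‖d‖ • w + ‖w‖ • d‖ ≤ 2 * (‖d‖ * ‖w‖) := by
      refine (norm_add_le _ _).trans_eq ?_
      simp only [norm_smul, norm_norm]; ring
    have h5 : ‖‖d‖ • w + ‖w‖ • d‖ ^ 2 ≤ (2 * (‖d‖ * ‖w‖)) ^ 2 := by gcongr
    have hs := rgs_symm hf z d w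
    simp only [map_add, map_sub, map_smul, inner_add_left, inner_add_right, inner_sub_left,
      inner_sub_right, real_inner_smul_left, real_inner_smul_right] at h1 h2
    rw [← hs, ← hz] at h1 h2
    have h6 := mul_le_mul_of_nonneg_left h5 hM.le
    have h7 : (4 * ‖d‖ * ‖w‖ ^ 2) * ‖w‖ ≤ (4 * ‖d‖ * ‖w‖ ^ 2) * (M * ‖d‖) := by
      nlinarith
    exact le_of_mul_le_mul_left h7 (by positivity)
  have hsq : ‖w‖ ^ 2 ≤ M ^ 2 * ‖d‖ ^ 2 := by
    rw [← mul_pow]; gcongr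
  rw [← Real.sqrt_sq (norm_nonneg d), ← Real.sqrt_mul' _ (sq_nonneg _)]
  apply Real.le_sqrt_of_sq_le
  rw [norm_sub_sq_real, real_inner_smul_right, norm_smul, mul_pow, Real.norm_eq_abs, sq_abs]
  have h8 := mul_le_mul_of_nonneg_left hsq (sq_nonneg η)
  have h9 := mul_le_mul_of_nonneg_left hlow hη.le
  nlinarith
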